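/- Let w₀ be the radial function w₀(r) = η₀(r) + 2r²/(1+r²) - η₀(r)²/2 + ((1-r²)/(1+r²)) ∫₁^{1+r²} (ln t)/(1-t) dt with η₀(r) = -ln(1+r²). Then ∫_{ℝ²} (-Δw₀) dx = 4π. -/

import Mathlib

/-!
Write `s = r²` and `w₀(r) = F(s)`, so that `F s = prof s` below, and let
`I(s) = ∫₁^{1+s} ln t / (1 - t) dt`. For a radial function on the plane, `Δ (F(|x|²)) = 4 G'(|x|²)`
with `G(s) = s F'(s)` (`lap_W0`). Since `I'(s) = -ln(1+s)/s`, the factor `1/s` cancels in `s F'(s)`: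
`G(s) = -s/(1+s) + 2s/(1+s)² - ln(1+s)/(1+s) - 2s I(s)/(1+s)²`,
which is `flux` below, and `G' = flux'` is again explicit in `ln(1+s)` and `I(s)`.

The elementary bound `ln t ≤ 2(√t - 1)` gives `ln t/(t-1) ≤ 2/√t`, hence `|I(s)| ≤ 4√(1+s)`
(`abs_dilogInt_le`). It follows that `|r G'(r²)| ≤ C/(1+r²)`, which is integrable on `(0,∞)`, and
that `G(s) → -1` as `s → ∞`. In polar coordinates the integral is therefore
`2π ∫₀^∞ -4 r G'(r²) dr = -4π (G(∞) - G(0)) = 4π`.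
-/

open MeasureTheory Real

noncomputable section

abbrev E2 := EuclideanSpace ℝ (Fin 2)

/-- The Euclidean Laplacian of `f : ℝ² → ℝ`, as sum of second directional derivatives. -/
def lap (f : E2 → ℝ) (x : E2) : ℝ :=
  ∑ i : Fin 2, deriv (deriv (fun t : ℝ => f (x + t • (EuclideanSpace.single i (1:ℝ))))) 0

/-- The radial profile `η₀(r) = -ln(1+r²)`. -/
def eta0r (r : ℝ) : ℝ := -Real.log (1 + r^2)

/-- The radial function `w₀`. -/
def W0 (r : ℝ) : ℝ :=
  eta0r r + 2*r^2/(1+r^2) - (eta0r r)^2/2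
    + ((1-r^2)/(1+r^2)) * ∫ t in (1:ℝ)..(1+r^2), Real.log t / (1-t)

open Filter Topology Set

/-! ### The profile and its flux -/

/-- The integral term of `w₀` as a function of its upper limit; it equals `Li₂(1 - u)` for
`u ≥ 1`. The junk value `0` of the integrand at `t = 1`, where its limit is `-1`, is immaterial. -/
def dilogInt (u : ℝ) : ℝ := ∫ t in (1:ℝ)..u, Real.log t / (1 - t)

/-- The profile `F` with `w₀(r) = F(r²)`. -/
def prof (s : ℝ) : ℝ :=
  -Real.log (1 + s) + 2 * s / (1 + s) - (-Real.log (1 + s)) ^ 2 / 2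
    + ((1 - s) / (1 + s)) * dilogInt (1 + s)

/-- The flux `G(s) = s F'(s)`, so that `r w₀'(r) = 2 G(r²)`. -/
def flux (s : ℝ) : ℝ :=
  -s / (1 + s) + 2 * s / (1 + s) ^ 2 - Real.log (1 + s) / (1 + s)
    - 2 * s / (1 + s) ^ 2 * dilogInt (1 + s)

/-- The derivative of `flux` on `(0, ∞)`. -/
def flux' (s : ℝ) : ℝ :=
  -2 / (1 + s) ^ 2 + 2 * (1 - s) / (1 + s) ^ 3 + 3 * Real.log (1 + s) / (1 + s) ^ 2
    - 2 * (1 - s) / (1 + s) ^ 3 * dilogInt (1 + s)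

/-! ### The dilogarithm integral -/

lemma log_le_two_mul_sqrt_sub {t : ℝ} (ht : 0 < t) : Real.log t ≤ 2 * (√t - 1) := by
  have h := Real.log_le_sub_one_of_pos (Real.sqrt_pos.2 ht)
  rw [Real.log_sqrt ht.le] at h
  linarith

lemma abs_integrand_le {t : ℝ} (ht : 1 < t) : |Real.log t / (1 - t)| ≤ 2 / √t := by
  have h0 : 0 < t := by linarith
  have hs : 0 < √t := Real.sqrt_pos.2 h0
  have hs1 : 1 < √t := by rw [Real.lt_sqrt] <;> linarith
  have hsq : √t ^ 2 = t := Real.sq_sqrt h0.le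
  have hlog := log_le_two_mul_sqrt_sub h0
  rw [abs_div, abs_of_nonneg (Real.log_nonneg ht.le), abs_of_neg (by linarith : 1 - t < 0),
    div_le_div_iff₀ (by linarith) hs]
  nlinarith

lemma integrand_measurable : Measurable (fun t : ℝ => Real.log t / (1 - t)) := by
  fun_prop

lemma majorant_intervalIntegrable {u : ℝ} (hu : 1 ≤ u) :
    IntervalIntegrable (fun t : ℝ => 2 / √t) volume 1 u := by
  apply ContinuousOn.intervalIntegrable
  intro t ht
  rw [uIcc_of_le hu] at ht
  have : √t ≠ 0 := (Real.sqrt_pos.2 (by linarith [ht.1])).ne'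
  exact ContinuousAt.continuousWithinAt (by fun_prop (disch := assumption))

lemma integrand_intervalIntegrable {u : ℝ} (hu : 1 ≤ u) :
    IntervalIntegrable (fun t : ℝ => Real.log t / (1 - t)) volume 1 u := by
  apply (majorant_intervalIntegrable hu).mono_fun' integrand_measurable.aestronglyMeasurable
  rw [uIoc_of_le hu]
  filter_upwards [ae_restrict_mem measurableSet_Ioc] with t ht
  exact abs_integrand_le ht.1

lemma abs_dilogInt_le {u : ℝ} (hu : 1 ≤ u) : |dilogInt u| ≤ 4 * √u := by
  have h1 : |dilogInt u| ≤ ∫ t in (1:ℝ)..u, 2 / √t := by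
    refine intervalIntegral.norm_integral_le_of_norm_le
      (f := fun t : ℝ => Real.log t / (1 - t)) hu ?_ (majorant_intervalIntegrable hu)
    exact Eventually.of_forall fun t ht => abs_integrand_le ht.1
  have h2 : ∫ t in (1:ℝ)..u, 2 / √t = 4 * √u - 4 * √1 := by
    apply intervalIntegral.integral_eq_sub_of_hasDerivAt (f := fun t => 4 * √t) _
      (majorant_intervalIntegrable hu)
    intro t ht
    rw [uIcc_of_le hu] at ht
    have h := (Real.hasDerivAt_sqrt (by linarith [ht.1] : t ≠ 0)).const_mul 4
    convert! h using 1
    ring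
  rw [h2] at h1
  simp at h1
  linarith

lemma hasDerivAt_dilogInt {u : ℝ} (hu : 1 < u) :
    HasDerivAt dilogInt (Real.log u / (1 - u)) u := by
  have h0 : u ≠ 0 := by linarith
  have h1 : 1 - u ≠ 0 := by linarith
  apply intervalIntegral.integral_hasDerivAt_right (integrand_intervalIntegrable hu.le)
  · exact integrand_measurable.stronglyMeasurable.stronglyMeasurableAtFilter
  · fun_prop (disch := assumption)

lemma hasDerivAt_dilogInt_one_add {s : ℝ} (hs : 0 < s) :
    HasDerivAt (fun s => dilogInt (1 + s)) (-(Real.log (1 + s) / s)) s := by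
  have h := (hasDerivAt_dilogInt (by linarith : 1 < 1 + s)).comp_const_add 1 s
  convert! h using 1
  rw [← div_neg]
  congr 1
  ring

/-! ### Derivatives of the profile and of the flux -/

lemma hasDerivAt_log_one_add {s : ℝ} (hs : 0 < s) :
    HasDerivAt (fun s => Real.log (1 + s)) (1 / (1 + s)) s := by
  have h := (Real.hasDerivAt_log (by linarith : 1 + s ≠ 0)).comp_const_add 1 s
  simpa using h

lemma hasDerivAt_prof {s : ℝ} (hs : 0 < s) : HasDerivAt prof (flux s / s) s := by
  have hu : 1 + s ≠ 0 := by linarith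
  have hs' : s ≠ 0 := hs.ne'
  have hL := hasDerivAt_log_one_add hs
  have hI := hasDerivAt_dilogInt_one_add hs
  have hid := hasDerivAt_id' s
  have h1 := hid.const_add 1
  have h := ((hL.neg.add ((hid.const_mul 2).div h1 hu)).sub ((hL.neg.pow 2).div_const 2)).add
    (((hid.const_sub 1).div h1 hu).mul hI)
  convert! h using 1
  simp only [flux, Pi.div_apply, Pi.neg_apply]
  field_simp
  ring

lemma hasDerivAt_flux {s : ℝ} (hs : 0 < s) : HasDerivAt flux (flux' s) s := by
  have hu : 1 + s ≠ 0 := by linarith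
  have hs' : s ≠ 0 := hs.ne'
  have hL := hasDerivAt_log_one_add hs
  have hI := hasDerivAt_dilogInt_one_add hs
  have hid := hasDerivAt_id' s
  have h1 := hid.const_add 1
  have hq := (hid.const_mul 2).div (h1.pow 2) (pow_ne_zero 2 hu)
  have h := (((hid.neg.div h1 hu).add hq).sub (hL.div h1 hu)).sub (hq.mul hI)
  convert! h using 1
  simp only [flux', Pi.div_apply, Pi.neg_apply, Pi.pow_apply]
  field_simp
  ring

/-! ### The Laplacian away from the origin -/

lemma W0_eq_prof (r : ℝ) : W0 r = prof (r ^ 2) := rfl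

lemma norm_sq_line (x : E2) (i : Fin 2) (t : ℝ) :
    ‖x + t • (EuclideanSpace.single i (1:ℝ))‖ ^ 2 = ‖x‖ ^ 2 + 2 * x i * t + t ^ 2 := by
  rw [norm_add_sq_real, inner_smul_right, norm_smul]
  simp [EuclideanSpace.inner_single_right]
  ring

/-- Second derivative of `F(|x|²)` in a coordinate direction: `4 xᵢ² F''(|x|²) + 2 F'(|x|²)`,
with `F' = G/s` and `F'' = (s G' - G)/s²`. -/
lemma second_deriv_line {x : E2} (hx : x ≠ 0) (i : Fin 2) :
    deriv (deriv (fun t : ℝ => W0 ‖x + t • (EuclideanSpace.single i (1:ℝ))‖)) 0 =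
      4 * x i ^ 2 * ((flux' (‖x‖ ^ 2) * ‖x‖ ^ 2 - flux (‖x‖ ^ 2)) / (‖x‖ ^ 2) ^ 2)
        + 2 * (flux (‖x‖ ^ 2) / ‖x‖ ^ 2) := by
  have hs : 0 < ‖x‖ ^ 2 := by positivity
  set s := ‖x‖ ^ 2 with hsdef
  set q : ℝ → ℝ := fun t => s + 2 * x i * t + t ^ 2 with hq
  have hfun : (fun t : ℝ => W0 ‖x + t • (EuclideanSpace.single i (1:ℝ))‖) = fun t => prof (q t) := by
    funext t
    rw [W0_eq_prof, norm_sq_line]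
  have hqd : ∀ t, HasDerivAt q (2 * x i + 2 * t) t := by
    intro t
    have h := (((hasDerivAt_id' t).const_mul (2 * x i)).const_add s).add ((hasDerivAt_id' t).pow 2)
    convert! h using 1
    simp
  have hq0 : q 0 = s := by simp [hq]
  have hqpos : ∀ᶠ t in 𝓝 0, 0 < q t :=
    (hqd 0).continuousAt.eventually_const_lt (by rw [hq0]; exact hs)
  have hd : deriv (fun t => prof (q t)) =ᶠ[𝓝 0] fun t => flux (q t) / q t * (2 * x i + 2 * t) := by
    filter_upwards [hqpos] with t ht
    exact ((hasDerivAt_prof ht).comp t (hqd t)).deriv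
  rw [hfun, hd.deriv_eq]
  have hf : HasDerivAt (fun t => flux (q t)) (flux' s * (2 * x i)) 0 := by
    have h := (hasDerivAt_flux (s := q 0) (by rw [hq0]; exact hs)).comp 0 (hqd 0)
    rw [hq0, mul_zero, add_zero] at h
    exact h
  have hlin : HasDerivAt (fun t : ℝ => 2 * x i + 2 * t) 2 0 := by
    simpa using ((hasDerivAt_id' (0:ℝ)).const_mul 2).const_add (2 * x i)
  have h := ((hf.div (hqd 0) (by rw [hq0]; exact hs.ne')).mul hlin).deriv
  refine Eq.trans h ?_
  simp only [Pi.div_apply, hq0]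
  field_simp
  ring

lemma lap_W0 {x : E2} (hx : x ≠ 0) : lap (fun y => W0 ‖y‖) x = 4 * flux' (‖x‖ ^ 2) := by
  have hs : 0 < ‖x‖ ^ 2 := by positivity
  have hsum : x 0 ^ 2 + x 1 ^ 2 = ‖x‖ ^ 2 := by
    rw [EuclideanSpace.real_norm_sq_eq, Fin.sum_univ_two]
  simp only [lap, second_deriv_line hx, Fin.sum_univ_two]
  have hs' := hs.ne'
  generalize ‖x‖ ^ 2 = s at *
  field_simp
  linear_combination (4 * (flux' s * s - flux s)) * hsum

/-! ### Decay estimates and integrability -/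

lemma abs_flux'_le {s : ℝ} (hs : 0 ≤ s) : |flux' s| ≤ 18 * √(1 + s) / (1 + s) ^ 2 := by
  have hu : 1 ≤ 1 + s := by linarith
  have hr : 1 ≤ √(1 + s) := by rw [Real.le_sqrt] <;> linarith
  have hL0 := Real.log_nonneg hu
  have hL := log_le_two_mul_sqrt_sub (by linarith : 0 < 1 + s)
  have hI := abs_dilogInt_le hu
  have hc : |(1 - s) / (1 + s)| ≤ 1 := by
    rw [abs_div, abs_of_pos (by linarith : 0 < 1 + s), div_le_one (by linarith), abs_le]
    constructor <;> linarith
  have hcI : |(1 - s) / (1 + s) * (1 - dilogInt (1 + s))| ≤ 1 + 4 * √(1 + s) := by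
    rw [abs_mul]
    have : |1 - dilogInt (1 + s)| ≤ 1 + 4 * √(1 + s) := by
      rw [abs_le] at hI ⊢
      constructor <;> linarith
    nlinarith [abs_nonneg (1 - dilogInt (1 + s)), abs_nonneg ((1 - s) / (1 + s))]
  have heq : flux' s = (-2 + 3 * Real.log (1 + s)
      + 2 * ((1 - s) / (1 + s) * (1 - dilogInt (1 + s)))) / (1 + s) ^ 2 := by
    unfold flux'
    field_simp
    ring
  rw [heq, abs_div, abs_of_pos (by positivity : 0 < (1 + s) ^ 2)]
  gcongr
  rw [abs_le] at hcI ⊢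
  constructor <;> linarith

lemma abs_mul_flux'_sq_le {r : ℝ} (hr : 0 < r) :
    |2 * r * flux' (r ^ 2)| ≤ 36 * (1 + r ^ 2)⁻¹ := by
  have hu : 0 < 1 + r ^ 2 := by positivity
  have h := abs_flux'_le (sq_nonneg r)
  have hrs : r ≤ √(1 + r ^ 2) := by apply Real.le_sqrt_of_sq_le; linarith
  have hsq : √(1 + r ^ 2) ^ 2 = 1 + r ^ 2 := Real.sq_sqrt hu.le
  rw [abs_mul, abs_of_pos (by positivity : 0 < 2 * r)]
  calc 2 * r * |flux' (r ^ 2)|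
      ≤ 2 * √(1 + r ^ 2) * (18 * √(1 + r ^ 2) / (1 + r ^ 2) ^ 2) := by gcongr
    _ = 36 * (√(1 + r ^ 2) ^ 2 / (1 + r ^ 2) ^ 2) := by ring
    _ = 36 * (1 + r ^ 2)⁻¹ := by rw [hsq]; field_simp

lemma hasDerivAt_flux_sq {r : ℝ} (hr : 0 < r) :
    HasDerivAt (fun r => flux (r ^ 2)) (2 * r * flux' (r ^ 2)) r := by
  have hq : HasDerivAt (fun r : ℝ => r ^ 2) (2 * r) r := by simpa using hasDerivAt_pow 2 r
  have hpos : 0 < r ^ 2 := by positivity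
  have h := HasDerivAt.comp (h₂ := flux) (h := fun r : ℝ => r ^ 2) r (hasDerivAt_flux hpos) hq
  convert! h using 1
  ring

lemma integrableOn_flux'_sq :
    IntegrableOn (fun r : ℝ => 2 * r * flux' (r ^ 2)) (Ioi 0) := by
  refine Integrable.mono' (g := fun r : ℝ => 36 * (1 + r ^ 2)⁻¹)
    (integrable_inv_one_add_sq.const_mul 36).integrableOn ?_ ?_
  · -- The function is a derivative, hence measurable.
    refine (measurable_deriv (fun r => flux (r ^ 2))).aestronglyMeasurable.congr ?_
    filter_upwards [ae_restrict_mem measurableSet_Ioi] with r hr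
    exact (hasDerivAt_flux_sq hr).deriv
  · filter_upwards [ae_restrict_mem measurableSet_Ioi] with r hr
    exact abs_mul_flux'_sq_le hr

/-! ### Boundary values of the flux and the integral -/

/-- `G + 1` is bounded by a multiple of `(1+s)^{-1/2}`. -/
lemma abs_flux_add_one_le {s : ℝ} (hs : 0 ≤ s) : |flux s + 1| ≤ 13 * (√(1 + s))⁻¹ := by
  have hu : 1 ≤ 1 + s := by linarith
  have hr : 1 ≤ √(1 + s) := by rw [Real.le_sqrt] <;> linarith
  have hsq : √(1 + s) ^ 2 = 1 + s := Real.sq_sqrt (by linarith)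
  have hL0 := Real.log_nonneg hu
  have hL := log_le_two_mul_sqrt_sub (by linarith : 0 < 1 + s)
  have hI := abs_dilogInt_le hu
  have hc0 : 0 ≤ s / (1 + s) := by positivity
  have hc : s / (1 + s) ≤ 1 := by rw [div_le_one] <;> linarith
  have hcI : |s / (1 + s) * (1 - dilogInt (1 + s))| ≤ 1 + 4 * √(1 + s) := by
    rw [abs_mul, abs_of_nonneg hc0]
    have : |1 - dilogInt (1 + s)| ≤ 1 + 4 * √(1 + s) := by
      rw [abs_le] at hI ⊢
      constructor <;> linarith
    nlinarith [abs_nonneg (1 - dilogInt (1 + s))]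
  have heq : flux s + 1 = (1 - Real.log (1 + s)
      + 2 * (s / (1 + s) * (1 - dilogInt (1 + s)))) / (1 + s) := by
    unfold flux
    field_simp
    ring
  have hinv : 13 * (√(1 + s))⁻¹ = 13 * √(1 + s) / (1 + s) := by
    field_simp
    exact hsq.symm
  rw [hinv, heq, abs_div, abs_of_pos (by positivity : 0 < 1 + s)]
  gcongr
  rw [abs_le] at hcI ⊢
  constructor <;> linarith

lemma tendsto_flux : Tendsto flux atTop (𝓝 (-1)) := by
  have h1 : Tendsto (fun s : ℝ => 13 * (√(1 + s))⁻¹) atTop (𝓝 0) := by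
    have h := (tendsto_inv_atTop_zero.comp (Real.tendsto_sqrt_atTop.comp
      (tendsto_atTop_add_const_left atTop (1:ℝ) tendsto_id))).const_mul 13
    simpa [Function.comp_def] using h
  have h2 : Tendsto (fun s => flux s + 1) atTop (𝓝 0) := by
    apply squeeze_zero_norm' _ h1
    filter_upwards [eventually_ge_atTop 0] with s hs
    exact abs_flux_add_one_le hs
  simpa using h2.sub_const 1

/-- Right-continuity of `G` at `0`, from the bound on the integral term times the factor `s`. -/
lemma tendsto_flux_zero : Tendsto flux (𝓝[>] 0) (𝓝 0) := by
  have hb : Tendsto (fun s : ℝ => 2 * s / (1 + s) ^ 2 * (4 * √(1 + s))) (𝓝[>] 0) (𝓝 0) := by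
    have : ContinuousAt (fun s : ℝ => 2 * s / (1 + s) ^ 2 * (4 * √(1 + s))) 0 := by
      fun_prop (disch := norm_num)
    simpa using this.tendsto.mono_left nhdsWithin_le_nhds
  have hI : Tendsto (fun s : ℝ => 2 * s / (1 + s) ^ 2 * dilogInt (1 + s)) (𝓝[>] 0) (𝓝 0) := by
    apply squeeze_zero_norm' _ hb
    filter_upwards [self_mem_nhdsWithin] with s hs
    have hs : 0 < s := hs
    rw [norm_mul, Real.norm_of_nonneg (by positivity)]
    gcongr
    exact abs_dilogInt_le (by linarith)
  have hE : Tendsto (fun s : ℝ => -s / (1 + s) + 2 * s / (1 + s) ^ 2 - Real.log (1 + s) / (1 + s))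
      (𝓝[>] 0) (𝓝 0) := by
    have : ContinuousAt (fun s : ℝ =>
        -s / (1 + s) + 2 * s / (1 + s) ^ 2 - Real.log (1 + s) / (1 + s)) 0 := by
      fun_prop (disch := norm_num)
    simpa using this.tendsto.mono_left nhdsWithin_le_nhds
  have h := hE.sub hI
  rw [sub_zero] at h
  exact h

lemma integral_flux'_sq : ∫ r in Ioi (0:ℝ), 2 * r * flux' (r ^ 2) = -1 := by
  have hz : flux ((0:ℝ) ^ 2) = 0 := by simp [flux]
  have h0 : ContinuousWithinAt (fun r : ℝ => flux (r ^ 2)) (Ici 0) 0 := by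
    rw [← continuousWithinAt_Ioi_iff_Ici, ContinuousWithinAt, hz]
    apply tendsto_flux_zero.comp
    apply tendsto_nhdsWithin_of_tendsto_nhds_of_eventually_within
    · have : ContinuousAt (fun r : ℝ => r ^ 2) 0 := by fun_prop
      simpa [ContinuousAt] using this.tendsto.mono_left (nhdsWithin_le_nhds (s := Ioi 0))
    · filter_upwards [self_mem_nhdsWithin] with r hr
      exact pow_pos (show (0:ℝ) < r from hr) 2
  have h1 : Tendsto (fun r : ℝ => flux (r ^ 2)) atTop (𝓝 (-1)) :=
    tendsto_flux.comp (tendsto_pow_atTop two_ne_zero)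
  have h := integral_Ioi_of_hasDerivAt_of_tendsto h0
    (fun r hr => hasDerivAt_flux_sq hr) integrableOn_flux'_sq h1
  rw [h, hz]
  norm_num

theorem stmt3 :
    (∫ x : E2, -lap (fun y => W0 ‖y‖) x) = 4 * Real.pi := by
  have hae : (fun x : E2 => -lap (fun y => W0 ‖y‖) x) =ᵐ[volume]
      fun x => (fun r : ℝ => -(4 * flux' (r ^ 2))) ‖x‖ := by
    have : ∀ᵐ x : E2, x ≠ 0 := by simp [ae_iff]
    filter_upwards [this] with x hx
    rw [lap_W0 hx]
  rw [integral_congr_ae hae,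
    integral_fun_norm_addHaar volume (fun r : ℝ => -(4 * flux' (r ^ 2)))]
  have hball : (volume : Measure E2).real (Metric.ball 0 1) = Real.pi := by
    simp [Measure.real, EuclideanSpace.volume_ball_fin_two, Real.pi_pos.le]
  have hint : ∫ y in Ioi (0:ℝ), y ^ (Module.finrank ℝ E2 - 1) • (-(4 * flux' (y ^ 2))) = 2 := by
    have hd : Module.finrank ℝ E2 = 2 := by simp
    rw [hd]
    have : ∀ y : ℝ, y ^ (2 - 1) • (-(4 * flux' (y ^ 2))) = (-2) * (2 * y * flux' (y ^ 2)) := by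
      intro y
      simp
      ring
    simp_rw [this]
    rw [integral_const_mul, integral_flux'_sq]
    norm_num
  rw [hint, hball]
  simp
  ring
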